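/- Let d ≥ 1 and let y₀, y₁, …, y_{d+1} be vectors in the Lorentzian space 𝕃^{d+1,1} = ℝ^{d+2} satisfying ⟨yᵢ, yⱼ⟩ = −(m − 1)/(m + 1) where m = max(i,j), for all i, j. Then, writing κᵢ = κ(yᵢ), one has κ_{d+1}² = (d/(d+2)) · Σ_{i=0}^{d} ((i+1)(i+2)/2) · (κᵢ − κ_{i+1})². -/

import Mathlib

/-!
The differences `zᵢ = yᵢ - yᵢ₊₁` (`0 ≤ i ≤ d`) together with `y_{d+1}` are pairwise
Lorentz-orthogonal, because `⟨yᵢ, yⱼ⟩ = g (max i j)` with `g m = -(m - 1) / (m + 1)`. Their squared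
norms are `⟨zᵢ, zᵢ⟩ = g i - g (i + 1) = 2 / ((i + 1) (i + 2))` and
`⟨y_{d+1}, y_{d+1}⟩ = -d / (d + 2)`, all nonzero since `d ≥ 1`, so these `d + 2` vectors form an
orthogonal basis. The curvature is, up to sign, the product with the light-like vector
`x_N = e_{d+1} + e_{d+2}`, and expanding `⟨x_N, x_N⟩ = 0` in this basis (`sum_curv_sq_div_eq_zero`)
gives `∑ (i + 1) (i + 2) / 2 * κ(zᵢ)² - (d + 2) / d * κ(y_{d+1})² = 0`.
-/

open Finset Matrix

/-- The Lorentzian product on `ℝ^n`: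
`⟨x, y⟩ = x₁y₁ + ⋯ + x_{n-1}y_{n-1} − x_n y_n`. -/
noncomputable def lprod {n : ℕ} (x y : Fin n → ℝ) : ℝ :=
  ∑ i : Fin n, (if (i : ℕ) + 1 = n then -1 else 1) * x i * y i

/-- The curvature of a vector `x ∈ 𝕃^{d+1,1}`: `κ(x) = x_{d+2} − x_{d+1}`. -/
noncomputable def curv {d : ℕ} (x : Fin (d + 2) → ℝ) : ℝ :=
  x ⟨d + 1, by omega⟩ - x ⟨d, by omega⟩

lemma lprod_sub_left {n : ℕ} (x x' y : Fin n → ℝ) :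
    lprod (x - x') y = lprod x y - lprod x' y := by
  simp only [lprod, ← Finset.sum_sub_distrib, Pi.sub_apply]
  exact Finset.sum_congr rfl fun i _ => by ring

lemma lprod_comm {n : ℕ} (x y : Fin n → ℝ) : lprod x y = lprod y x :=
  Finset.sum_congr rfl fun i _ => by ring

lemma lprod_sub_right {n : ℕ} (x y y' : Fin n → ℝ) :
    lprod x (y - y') = lprod x y - lprod x y' := by
  rw [lprod_comm, lprod_sub_left, lprod_comm y, lprod_comm y']

lemma curv_sub {d : ℕ} (x y : Fin (d + 2) → ℝ) : curv (x - y) = curv x - curv y := by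
  simp only [curv, Pi.sub_apply]
  ring

/-- Completeness relation of an orthogonal basis: if `W η Wᵀ` is an invertible diagonal matrix
`D`, then `Wᵀ D⁻¹ W = η`, where `η` is the Gram matrix of the Lorentzian product. -/
lemma sum_mul_div_eq {n : ℕ} (w : Fin n → Fin n → ℝ) (D : Fin n → ℝ) (hD : ∀ k, D k ≠ 0)
    (hw : ∀ i j, lprod (w i) (w j) = if i = j then D i else 0) (a b : Fin n) :
    ∑ k, w k a * w k b / D k =
      if a = b then (if (a : ℕ) + 1 = n then -1 else 1) else 0 := by
  set s : Fin n → ℝ := fun i => if (i : ℕ) + 1 = n then -1 else 1 with hs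
  have hss : ∀ i, s i * s i = 1 := fun i => by simp only [hs]; split_ifs <;> norm_num
  let W : Matrix (Fin n) (Fin n) ℝ := Matrix.of w
  let R : Matrix (Fin n) (Fin n) ℝ := Matrix.of fun a k => s a * w k a / D k
  have h1 : W * R = 1 := by
    ext i j
    have h : (W * R) i j = lprod (w i) (w j) / D j := by
      simp only [Matrix.mul_apply, W, R, Matrix.of_apply, lprod, Finset.sum_div]
      exact Finset.sum_congr rfl fun k _ => by simp only [hs]; ring
    rw [h, hw, Matrix.one_apply]
    split_ifs with hij
    · rw [hij, div_self (hD j)]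
    · simp
  -- A right inverse of a square matrix is a left inverse.
  have h2 : R * W = 1 := mul_eq_one_comm.mp h1
  have h3 := congrFun (congrFun h2 a) b
  have h4 : ∑ k, w k a * w k b / D k = s a * (R * W) a b := by
    simp only [Matrix.mul_apply, W, R, Matrix.of_apply, Finset.mul_sum]
    refine Finset.sum_congr rfl fun k _ => ?_
    linear_combination (-(w k a * w k b / D k)) * hss a
  rw [h4, h3, Matrix.one_apply, mul_ite, mul_one, mul_zero]

/-- The light-like vector `x_N` has squared norm `0`, expanded in an orthogonal basis. -/
lemma sum_curv_sq_div_eq_zero {d : ℕ} (w : Fin (d + 2) → Fin (d + 2) → ℝ) (D : Fin (d + 2) → ℝ)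
    (hD : ∀ k, D k ≠ 0) (hw : ∀ i j, lprod (w i) (w j) = if i = j then D i else 0) :
    ∑ k, curv (w k) ^ 2 / D k = 0 := by
  have key := sum_mul_div_eq w D hD hw
  let p : Fin (d + 2) := ⟨d + 1, by omega⟩
  let q : Fin (d + 2) := ⟨d, by omega⟩
  have h : ∑ k, curv (w k) ^ 2 / D k = ∑ k, w k p * w k p / D k
      - 2 * ∑ k, w k p * w k q / D k + ∑ k, w k q * w k q / D k := by
    rw [Finset.mul_sum, ← Finset.sum_sub_distrib, ← Finset.sum_add_distrib]
    exact Finset.sum_congr rfl fun k _ => by simp only [curv, p, q]; ring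
  rw [h, key, key, key]
  simp [p, q]

/-- **Descartes-type theorem for the `(d+1)`-simplex.** If `y₀, …, y_{d+1}` are vectors of
`𝕃^{d+1,1}` with `⟨yᵢ, yⱼ⟩ = −(m−1)/(m+1)` where `m = max(i,j)`, then their curvatures
satisfy `κ_{d+1}² = (d/(d+2)) · Σ_{i=0}^{d} ((i+1)(i+2)/2) (κᵢ − κ_{i+1})²`. -/
theorem simplex_descartes_theorem (d : ℕ) (hd : 1 ≤ d)
    (y : ℕ → (Fin (d + 2) → ℝ))
    (hgram : ∀ i ≤ d + 1, ∀ j ≤ d + 1,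
      lprod (y i) (y j) = -(((max i j : ℕ) : ℝ) - 1) / ((max i j : ℕ) + 1)) :
    (curv (y (d + 1))) ^ 2 =
      ((d : ℝ) / (d + 2)) * ∑ i ∈ Finset.range (d + 1),
        (((i : ℝ) + 1) * ((i : ℝ) + 2) / 2) * (curv (y i) - curv (y (i + 1))) ^ 2 := by
  have hd0 : (d : ℝ) ≠ 0 := by positivity
  have hd2 : (d : ℝ) + 2 ≠ 0 := by positivity
  let z : ℕ → Fin (d + 2) → ℝ := fun i => y i - y (i + 1)
  have hzy : ∀ i ≤ d, lprod (z i) (y (d + 1)) = 0 := fun i hi => by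
    rw [lprod_sub_left, hgram i (by omega) _ le_rfl, hgram (i + 1) (by omega) _ le_rfl,
      max_eq_right (by omega : i ≤ d + 1), max_eq_right (by omega : i + 1 ≤ d + 1), sub_self]
  have hlt : ∀ i j, i < j → j ≤ d → lprod (z i) (z j) = 0 := fun i j hij hj => by
    rw [lprod_sub_left, lprod_sub_right, lprod_sub_right,
      hgram i (by omega) j (by omega), hgram i (by omega) (j + 1) (by omega),
      hgram (i + 1) (by omega) j (by omega), hgram (i + 1) (by omega) (j + 1) (by omega),
      max_eq_right (by omega : i ≤ j), max_eq_right (by omega : i ≤ j + 1),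
      max_eq_right (by omega : i + 1 ≤ j), max_eq_right (by omega : i + 1 ≤ j + 1), sub_self]
  have hzz : ∀ i ≤ d, lprod (z i) (z i) = 2 / (((i : ℝ) + 1) * ((i : ℝ) + 2)) := fun i hi => by
    rw [lprod_sub_left, lprod_sub_right, lprod_sub_right,
      hgram i (by omega) i (by omega), hgram i (by omega) (i + 1) (by omega),
      hgram (i + 1) (by omega) i (by omega), hgram (i + 1) (by omega) (i + 1) (by omega),
      max_self, max_self, max_eq_right (by omega : i ≤ i + 1),
      max_eq_left (by omega : i ≤ i + 1)]
    have h1 : (i : ℝ) + 1 ≠ 0 := by positivity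
    have h2 : (i : ℝ) + 2 ≠ 0 := by positivity
    have h3 : (i : ℝ) + 1 + 1 ≠ 0 := by positivity
    push_cast
    field_simp
    ring
  have hyy : lprod (y (d + 1)) (y (d + 1)) = -(d : ℝ) / (d + 2) := by
    rw [hgram _ le_rfl _ le_rfl, max_self]
    push_cast
    congr 1 <;> ring
  have key := sum_curv_sq_div_eq_zero (d := d)
    (Fin.snoc (α := fun _ => Fin (d + 2) → ℝ) (fun i : Fin (d + 1) => z i) (y (d + 1)))
    (Fin.snoc (α := fun _ => ℝ)
      (fun i : Fin (d + 1) => 2 / (((i : ℕ) + 1 : ℝ) * ((i : ℕ) + 2 : ℝ))) (-(d : ℝ) / (d + 2)))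
    (fun k => by
      refine Fin.lastCases ?_ (fun i => ?_) k
      · rw [Fin.snoc_last]
        exact div_ne_zero (neg_ne_zero.mpr hd0) hd2
      · rw [Fin.snoc_castSucc]
        positivity)
    (fun i j => by
      refine Fin.lastCases ?_ (fun i => ?_) i <;> refine Fin.lastCases ?_ (fun j => ?_) j
      · simpa using hyy
      · rw [Fin.snoc_last, Fin.snoc_castSucc, if_neg (Fin.castSucc_lt_last j).ne', lprod_comm]
        exact hzy j (by omega)
      · rw [Fin.snoc_last, Fin.snoc_castSucc, if_neg (Fin.castSucc_lt_last i).ne]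
        exact hzy i (by omega)
      · simp only [Fin.snoc_castSucc, Fin.castSucc_inj]
        rcases lt_trichotomy i j with h | h | h
        · rw [if_neg h.ne]
          exact hlt i j h (by omega)
        · subst h
          rw [if_pos rfl]
          exact hzz i (by omega)
        · rw [if_neg h.ne', lprod_comm]
          exact hlt j i h (by omega))
  rw [Fin.sum_univ_castSucc] at key
  simp only [Fin.snoc_castSucc, Fin.snoc_last] at key
  have hsum : ∑ i : Fin (d + 1), curv (z i) ^ 2 / (2 / (((i : ℕ) + 1 : ℝ) * ((i : ℕ) + 2 : ℝ)))
      = ∑ i ∈ Finset.range (d + 1),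
        (((i : ℝ) + 1) * ((i : ℝ) + 2) / 2) * (curv (y i) - curv (y (i + 1))) ^ 2 := by
    rw [Finset.sum_range]
    refine Finset.sum_congr rfl fun i _ => ?_
    rw [curv_sub, div_div_eq_mul_div]
    ring
  rw [hsum] at key
  rw [eq_neg_of_add_eq_zero_left key]
  field_simp
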